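/- arXiv:1406.6210 — 2 statements merged into one kernel-verified Lean document; each statement's English description precedes it below -/
import Mathlib

section
/- Let t ≥ 3 be an integer and L = 8t. Then M_S(L,3) ≤ L/8, and moreover: M_S(L,3) ≥ 7L/64 if t ≡ 0 (mod 8); M_S(L,3) ≥ (7L+8)/64 if t ≡ 1 (mod 8); M_S(L,3) ≥ (7L−48)/64 if t ≡ 2 or 10 (mod 24); M_S(L,3) ≥ (7L+24)/64 if t ≡ 3 (mod 24); M_S(L,3) ≥ (7L−32)/64 if t ≡ 4 or 20 (mod 24); M_S(L,3) ≥ (7L−24)/64 if t ≡ 5 or 13 (mod 24); M_S(L,3) ≥ (7L−16)/64 if t ≡ 6 (mod 8); M_S(L,3) ≥ (7L−8)/64 if t ≡ 7 (mod 8); M_S(L,3) ≥ (7L−40)/64 if t ≡ 11 or 19 (mod 24); M_S(L,3) ≥ (7L+32)/64 if t ≡ 12 (mod 24); M_S(L,3) ≥ (7L+16)/64 if t ≡ 18 (mod 24); and M_S(L,3) ≥ (7L+40)/64 if t ≡ 21 (mod 24). -/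
open Finset

/-- The set of differences of a codeword `I ⊆ ℤ_L`. -/
def dset {L : ℕ} (I : Finset (ZMod L)) : Finset (ZMod L) :=
  (I ×ˢ I).image fun p => p.1 - p.2

/-- The set of nonzero differences. -/
def dstar {L : ℕ} (I : Finset (ZMod L)) : Finset (ZMod L) := dset I \ {0}

/-- The set of shifted nonzero differences `d⁺(I) = d*(I) ∪ (d*(I)+1)`. -/
def dplus {L : ℕ} (I : Finset (ZMod L)) : Finset (ZMod L) :=
  dstar I ∪ (dstar I).image (· + 1)

/-- A strongly conflict-avoiding code of length `L` and weight `ω`. -/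
def IsSCAC (L ω : ℕ) (C : Finset (Finset (ZMod L))) : Prop :=
  (∀ I ∈ C, I.card = ω) ∧
  (∀ I ∈ C, (1 : ZMod L) ∉ dstar I ∧ (-1 : ZMod L) ∉ dstar I) ∧
  ∀ I ∈ C, ∀ J ∈ C, I ≠ J → Disjoint (dplus I) (dplus J)

/-- `M_S(L,ω)`: the maximum size of an SCAC of length `L` and weight `ω`. -/
noncomputable def MS (L ω : ℕ) : ℕ :=
  sSup {n | ∃ C : Finset (Finset (ZMod L)), IsSCAC L ω C ∧ C.card = n}

/-! ### Basic membership facts -/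

theorem mem_dstar_iff {L : ℕ} (I : Finset (ZMod L)) (x : ZMod L) :
    x ∈ dstar I ↔ (∃ p ∈ I, ∃ q ∈ I, p - q = x) ∧ x ≠ 0 := by
  simp only [dstar, dset, mem_sdiff, mem_image, mem_product, mem_singleton, Prod.exists]
  constructor
  · rintro ⟨⟨p, q, ⟨hp, hq⟩, h⟩, h0⟩
    exact ⟨⟨p, hp, q, hq, h⟩, h0⟩
  · rintro ⟨⟨p, hp, q, hq, h⟩, h0⟩
    exact ⟨⟨p, q, ⟨hp, hq⟩, h⟩, h0⟩

theorem mem_dplus_iff {L : ℕ} (I : Finset (ZMod L)) (x : ZMod L) :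
    x ∈ dplus I ↔ x ∈ dstar I ∨ x - 1 ∈ dstar I := by
  simp only [dplus, mem_union, mem_image]
  constructor
  · rintro (h | ⟨y, hy, rfl⟩)
    · exact Or.inl h
    · right; simpa using hy
  · rintro (h | h)
    · exact Or.inl h
    · exact Or.inr ⟨x - 1, h, by ring⟩

theorem neg_mem_dstar {L : ℕ} (I : Finset (ZMod L)) (x : ZMod L) (h : x ∈ dstar I) :
    -x ∈ dstar I := by
  rw [mem_dstar_iff] at h ⊢
  obtain ⟨⟨p, hp, q, hq, h⟩, h0⟩ := h
  exact ⟨⟨q, hq, p, hp, by rw [← h]; ring⟩, by simpa using h0⟩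

/-! ### Upper bound -/

/-- Both signs of the natural number `w` occur as differences of `I`. -/
def Mm {L : ℕ} (I : Finset (ZMod L)) (w : ℕ) : Prop :=
  (w : ZMod L) ∈ dstar I ∧ -(w : ZMod L) ∈ dstar I

theorem exists_sorted {L : ℕ} (I : Finset (ZMod L)) (a b c : ℕ)
    (ha : 1 ≤ a) (hb : 1 ≤ b) (hc : 1 ≤ c) (hs : a + b + c = L)
    (ma : Mm I a) (mb : Mm I b) (mc : Mm I c) :
    ∃ a b c : ℕ, 1 ≤ a ∧ a ≤ b ∧ b ≤ c ∧ a + b + c = L ∧ Mm I a ∧ Mm I b ∧ Mm I c := by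
  rcases le_total a b with h1 | h1 <;> rcases le_total b c with h2 | h2 <;>
    rcases le_total a c with h3 | h3
  · exact ⟨a, b, c, by omega, h1, h2, by omega, ma, mb, mc⟩
  · exact ⟨a, b, c, by omega, h1, h2, by omega, ma, mb, mc⟩
  · exact ⟨a, c, b, by omega, h3, h2, by omega, ma, mc, mb⟩
  · exact ⟨c, a, b, by omega, h3, h1, by omega, mc, ma, mb⟩
  · exact ⟨b, a, c, by omega, h1, h3, by omega, mb, ma, mc⟩
  · exact ⟨b, c, a, by omega, h2, h3, by omega, mb, mc, ma⟩
  · exact ⟨c, b, a, by omega, h2, h1, by omega, mc, mb, ma⟩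
  · exact ⟨c, b, a, by omega, h2, h1, by omega, mc, mb, ma⟩

theorem exists_abc {L : ℕ} [NeZero L] (I : Finset (ZMod L)) (hI : I.card = 3) :
    ∃ a b c : ℕ, 1 ≤ a ∧ a ≤ b ∧ b ≤ c ∧ a + b + c = L ∧ Mm I a ∧ Mm I b ∧ Mm I c := by
  obtain ⟨x, y, z, hxy, hxz, hyz, rfl⟩ := Finset.card_eq_three.mp hI
  set I : Finset (ZMod L) := {x, y, z} with hIdef
  have key : ∀ p ∈ I, ∀ q ∈ I, p ≠ q → 1 ≤ (p - q).val ∧ (p - q).val < L ∧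
      Mm I (p - q).val ∧ Mm I (L - (p - q).val) := by
    intro p hp q hq hpq
    have h0 : p - q ≠ 0 := sub_ne_zero.mpr hpq
    have hv : (p - q).val ≠ 0 := by rwa [Ne, ZMod.val_eq_zero]
    have hlt := ZMod.val_lt (p - q)
    have m1 : p - q ∈ dstar I := (mem_dstar_iff _ _).2 ⟨⟨p, hp, q, hq, rfl⟩, h0⟩
    have m2 := neg_mem_dstar I _ m1
    refine ⟨by omega, hlt, ?_, ?_⟩
    · unfold Mm
      rw [ZMod.natCast_zmod_val]
      exact ⟨m1, m2⟩
    · unfold Mm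
      rw [Nat.cast_sub hlt.le, ZMod.natCast_zmod_val]
      simp only [ZMod.natCast_self, zero_sub, neg_neg]
      exact ⟨m2, m1⟩
  have hx : x ∈ I := by simp [hIdef]
  have hy : y ∈ I := by simp [hIdef]
  have hz : z ∈ I := by simp [hIdef]
  obtain ⟨a1, a2, a3, a4⟩ := key x hx y hy hxy
  obtain ⟨b1, b2, b3, b4⟩ := key y hy z hz hyz
  obtain ⟨c1, c2, c3, c4⟩ := key z hz x hx hxz.symm
  have hsum : L ∣ (x - y).val + (y - z).val + (z - x).val := by
    rw [← ZMod.natCast_eq_zero_iff]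
    push_cast
    rw [ZMod.natCast_zmod_val, ZMod.natCast_zmod_val, ZMod.natCast_zmod_val]
    ring
  obtain ⟨k, hk⟩ := hsum
  have hk1 : k = 1 ∨ k = 2 := by
    have h0 : k ≠ 0 := by rintro rfl; omega
    have h3 : k < 3 := by
      by_contra h
      have : L * 3 ≤ L * k := Nat.mul_le_mul_left _ (by omega)
      omega
    omega
  rcases hk1 with rfl | rfl
  · exact exists_sorted I _ _ _ a1 b1 c1 (by omega) a3 b3 c3
  · exact exists_sorted I _ _ _ (by omega) (by omega) (by omega) (by omega) a4 b4 c4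

theorem n_le_card {n : ℕ} (s : Finset ℕ) (x : Fin n → ℕ) (hx : StrictMono x)
    (h : ∀ i, x i ∈ s) : n ≤ s.card := by
  have := Finset.card_le_card_of_injOn (s := Finset.univ) (t := s) x (fun i _ => h i)
    (hx.injective.injOn)
  simpa using this

theorem four_of (s : Finset ℕ) (x1 x2 x3 x4 : ℕ)
    (h : x1 ∈ s ∧ x2 ∈ s ∧ x3 ∈ s ∧ x4 ∈ s)
    (h' : x1 < x2 ∧ x2 < x3 ∧ x3 < x4) : 4 ≤ s.card := by
  obtain ⟨m1, m2, m3, m4⟩ := h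
  refine n_le_card s ![x1, x2, x3, x4] ?_ ?_
  · rw [Fin.strictMono_iff_lt_succ]; intro i; fin_cases i <;> simp <;> omega
  · intro i; fin_cases i <;> simpa

theorem six_of (s : Finset ℕ) (x1 x2 x3 x4 x5 x6 : ℕ)
    (h : x1 ∈ s ∧ x2 ∈ s ∧ x3 ∈ s ∧ x4 ∈ s ∧ x5 ∈ s ∧ x6 ∈ s)
    (h' : x1 < x2 ∧ x2 < x3 ∧ x3 < x4 ∧ x4 < x5 ∧ x5 < x6) : 6 ≤ s.card := by
  obtain ⟨m1, m2, m3, m4, m5, m6⟩ := h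
  refine n_le_card s ![x1, x2, x3, x4, x5, x6] ?_ ?_
  · rw [Fin.strictMono_iff_lt_succ]; intro i; fin_cases i <;> simp <;> omega
  · intro i; fin_cases i <;> simpa

theorem eight_of (s : Finset ℕ) (x1 x2 x3 x4 x5 x6 x7 x8 : ℕ)
    (h : x1 ∈ s ∧ x2 ∈ s ∧ x3 ∈ s ∧ x4 ∈ s ∧ x5 ∈ s ∧ x6 ∈ s ∧ x7 ∈ s ∧ x8 ∈ s)
    (h' : x1 < x2 ∧ x2 < x3 ∧ x3 < x4 ∧ x4 < x5 ∧ x5 < x6 ∧ x6 < x7 ∧ x7 < x8) :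
    8 ≤ s.card := by
  obtain ⟨m1, m2, m3, m4, m5, m6, m7, m8⟩ := h
  refine n_le_card s ![x1, x2, x3, x4, x5, x6, x7, x8] ?_ ?_
  · rw [Fin.strictMono_iff_lt_succ]; intro i; fin_cases i <;> simp <;> omega
  · intro i; fin_cases i <;> simpa

/-- `d⁺(I)` as a set of natural numbers below `L`. -/
def NN {L : ℕ} (I : Finset (ZMod L)) : Finset ℕ :=
  (Finset.range L).filter fun n => (n : ZMod L) ∈ dplus I

/-- the exceptional codewords with three times a difference close to `0`. -/
def EE {L : ℕ} (I : Finset (ZMod L)) : Prop :=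
  ∃ v : ℕ, (v : ZMod L) ∈ dstar I ∧ (3 * v = L ∨ 3 * v + 1 = L ∨ 3 * v = L + 1)

/-- the exceptional codewords containing the difference `L / 2`. -/
def DD {L : ℕ} (t : ℕ) (I : Finset (ZMod L)) : Prop := ((4 * t : ℕ) : ZMod L) ∈ dstar I

theorem card_NN (t L : ℕ) (ht : 3 ≤ t) (hL : L = 8 * t) (I : Finset (ZMod L))
    (hI : I.card = 3) (h1 : (1 : ZMod L) ∉ dstar I) :
    8 ≤ (NN I).card ∨ (6 ≤ (NN I).card ∧ DD t I) ∨ (4 ≤ (NN I).card ∧ EE I) := by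
  have : NeZero L := ⟨by omega⟩
  obtain ⟨a, b, c, ha, hab, hbc, hs, ma, mb, mc⟩ := exists_abc I hI
  have ne1 : a ≠ 1 := by
    rintro rfl
    exact h1 (by simpa using ma.1)
  have two : 2 ≤ a := by omega
  have base : ∀ w : ℕ, w + 2 ≤ L → (w : ZMod L) ∈ dstar I → w ∈ NN I ∧ w + 1 ∈ NN I := by
    intro w hw hm
    constructor
    · simp only [NN, mem_filter, mem_range, mem_dplus_iff]
      exact ⟨by omega, Or.inl hm⟩
    · simp only [NN, mem_filter, mem_range, mem_dplus_iff]
      exact ⟨by omega, Or.inr (by push_cast; simpa using hm)⟩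
  have hneg : ∀ w w' : ℕ, w + w' = L → Mm I w → (w' : ZMod L) ∈ dstar I := by
    intro w w' h hm
    have : (w' : ZMod L) = -(w : ZMod L) := by
      rw [eq_neg_iff_add_eq_zero, ← Nat.cast_add, add_comm, h, ZMod.natCast_self]
    rw [this]; exact hm.2
  obtain ⟨A, A'⟩ := base a (by omega) ma.1
  obtain ⟨B, B'⟩ := base b (by omega) mb.1
  obtain ⟨C, C'⟩ := base c (by omega) mc.1
  obtain ⟨AB, AB'⟩ := base (a + b) (by omega) (hneg c _ (by omega) mc)
  obtain ⟨AC, AC'⟩ := base (a + c) (by omega) (hneg b _ (by omega) mb)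
  obtain ⟨BC, BC'⟩ := base (b + c) (by omega) (hneg a _ (by omega) ma)
  by_cases e1 : a = b
  · by_cases e2 : b = c
    · right; right
      exact ⟨four_of _ a (a + 1) (a + b) (a + b + 1) ⟨A, A', AB, AB'⟩ (by omega),
        a, ma.1, by omega⟩
    · by_cases e3 : c = a + b
      · right; left
        refine ⟨six_of _ a (a + 1) c (c + 1) (a + c) (a + c + 1) ⟨A, A', C, C', AC, AC'⟩
          (by omega), ?_⟩
        have : c = 4 * t := by omega
        unfold DD
        rw [← this]; exact mc.1
      · by_cases e4 : c = a + 1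
        · right; right
          exact ⟨four_of _ a (a + 1) (a + b) (a + b + 1) ⟨A, A', AB, AB'⟩ (by omega),
            a, ma.1, by omega⟩
        · left
          by_cases e5 : c < a + b
          · exact eight_of _ a (a + 1) c (c + 1) (a + b) (a + b + 1) (a + c) (a + c + 1)
              ⟨A, A', C, C', AB, AB', AC, AC'⟩ (by omega)
          · exact eight_of _ a (a + 1) (a + b) (a + b + 1) c (c + 1) (a + c) (a + c + 1)
              ⟨A, A', AB, AB', C, C', AC, AC'⟩ (by omega)
  · by_cases e2 : b = c
    · by_cases e3 : b = a + 1
      · right; right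
        exact ⟨four_of _ a (a + 1) (a + b) (a + b + 1) ⟨A, A', AB, AB'⟩ (by omega),
            b, mb.1, by omega⟩
      · left
        exact eight_of _ a (a + 1) b (b + 1) (a + b) (a + b + 1) (b + c) (b + c + 1)
          ⟨A, A', B, B', AB, AB', BC, BC'⟩ (by omega)
    · left
      by_cases e3 : c = a + b
      · exact eight_of _ a (a + 1) b (b + 1) (a + b) (a + b + 1) (b + c) (b + c + 1)
          ⟨A, A', B, B', AB, AB', BC, BC'⟩ (by omega)
      · by_cases e4 : a + b < c
        · exact eight_of _ a b (a + b) c (c + 1) (a + c) (b + c) (b + c + 1)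
            ⟨A, B, AB, C, C', AC, BC, BC'⟩ (by omega)
        · by_cases e5 : c = b + 1
          · exact eight_of _ a b c (c + 1) (a + b) (a + c) (b + c) (b + c + 1)
              ⟨A, B, C, C', AB, AC, BC, BC'⟩ (by omega)
          · exact eight_of _ a b c (a + b) (a + b + 1) (a + c) (b + c) (b + c + 1)
              ⟨A, B, C, AB, AB', AC, BC, BC'⟩ (by omega)

theorem scac_card_le (t L : ℕ) (ht : 3 ≤ t) (hL : L = 8 * t) (C : Finset (Finset (ZMod L)))
    (hC : IsSCAC L 3 C) : C.card ≤ t := by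
  classical
  have : NeZero L := ⟨by omega⟩
  obtain ⟨hcard, hone, hdis⟩ := hC
  have hcommon : ∀ I ∈ C, ∀ J ∈ C, ∀ x, x ∈ dstar I → x ∈ dstar J → I = J := by
    intro I hI J hJ x hx hy
    by_contra hne
    exact Finset.disjoint_left.mp (hdis I hI J hJ hne)
      ((mem_dplus_iff _ _).2 (Or.inl hx)) ((mem_dplus_iff _ _).2 (Or.inl hy))
  have hD : (C.filter (fun I => DD t I)).card ≤ 1 := by
    rw [Finset.card_le_one]
    intro I hI J hJ
    rw [mem_filter] at hI hJ
    exact hcommon I hI.1 J hJ.1 _ hI.2 hJ.2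
  have hE : (C.filter (fun I => EE I)).card ≤ 1 := by
    rw [Finset.card_le_one]
    intro I hI J hJ
    rw [mem_filter] at hI hJ
    obtain ⟨hI, v, hv, hv'⟩ := hI
    obtain ⟨hJ, w, hw, hw'⟩ := hJ
    have : v = w := by omega
    subst this
    exact hcommon I hI J hJ _ hv hw
  have hpt : ∀ I ∈ C, 8 ≤ (NN I).card + (if DD t I then 2 else 0) + (if EE I then 4 else 0) := by
    intro I hI
    rcases card_NN t L ht hL I (hcard I hI) (hone I hI).1 with h | ⟨h, h'⟩ | ⟨h, h'⟩
    · omega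
    · rw [if_pos h']; omega
    · rw [if_pos h']; omega
  have hsum := Finset.sum_le_sum hpt
  rw [Finset.sum_const, Finset.sum_add_distrib, Finset.sum_add_distrib,
    ← Finset.sum_filter, ← Finset.sum_filter, Finset.sum_const, Finset.sum_const] at hsum
  have hdisj : (C : Set (Finset (ZMod L))).PairwiseDisjoint (fun I => NN I) := by
    intro I hI J hJ hne
    rw [Function.onFun, Finset.disjoint_left]
    intro n hn hm
    simp only [NN, mem_filter] at hn hm
    exact Finset.disjoint_left.mp (hdis I hI J hJ hne) hn.2 hm.2
  have hcardU := Finset.card_biUnion hdisj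
  have hsub : C.biUnion (fun I => NN I) ⊆ Finset.Ico 2 L := by
    intro n hn
    rw [mem_biUnion] at hn
    obtain ⟨I, hI, hn⟩ := hn
    simp only [NN, mem_filter, mem_range] at hn
    obtain ⟨hlt, hm⟩ := hn
    rw [mem_Ico]
    refine ⟨?_, hlt⟩
    by_contra h2
    have h0 : (0 : ZMod L) ∉ dstar I := by
      rw [mem_dstar_iff]; simp
    have hn01 : n = 0 ∨ n = 1 := by omega
    rw [mem_dplus_iff] at hm
    rcases hn01 with rfl | rfl
    · rcases hm with h | h
      · exact h0 (by simpa using h)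
      · exact (hone I hI).2 (by simpa using h)
    · rcases hm with h | h
      · exact (hone I hI).1 (by simpa using h)
      · exact h0 (by simpa using h)
  have hle := Finset.card_le_card hsub
  rw [hcardU, Nat.card_Ico] at hle
  simp only [smul_eq_mul] at hsum
  omega

theorem MS_le (t L : ℕ) (ht : 3 ≤ t) (hL : L = 8 * t) : MS L 3 ≤ t := by
  unfold MS
  apply csSup_le
  · exact ⟨0, ∅, by simp [IsSCAC], by simp⟩
  · rintro n ⟨C, hC, rfl⟩
    exact scac_card_le t L ht hL C hC

theorem le_MS (t L : ℕ) (ht : 3 ≤ t) (hL : L = 8 * t) (C : Finset (Finset (ZMod L)))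
    (hC : IsSCAC L 3 C) : C.card ≤ MS L 3 := by
  unfold MS
  apply le_csSup
  · refine ⟨t, ?_⟩
    rintro n ⟨C, hC, rfl⟩
    exact scac_card_le t L ht hL C hC
  · exact ⟨C, hC, rfl⟩

/-! ### Lower bound: codes of codewords `{0, p, 2p}` -/

/-- at distance at least two -/
def Far (x y : ℕ) : Prop := x + 2 ≤ y ∨ y + 2 ≤ x

theorem crit (t L : ℕ) (ht : 3 ≤ t) (hL : L = 8 * t) (S : Finset ℕ) (p q : ℕ → ℕ)
    (hp : ∀ i ∈ S, 2 ≤ p i ∧ p i ≤ 4 * t)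
    (hq : ∀ i ∈ S, 2 ≤ q i ∧ q i ≤ 4 * t)
    (hpq : ∀ i ∈ S, 2 * p i = q i ∨ 2 * p i + q i = 8 * t)
    (hfar : ∀ i ∈ S, ∀ j ∈ S, i ≠ j →
      Far (p i) (p j) ∧ Far (p i) (q j) ∧ Far (q i) (q j)) :
    S.card ≤ MS L 3 := by
  classical
  have : NeZero L := ⟨by omega⟩
  set W : ℕ → Finset (ZMod L) := fun i => {0, (p i : ZMod L), 2 * (p i : ZMod L)} with hW
  -- integers near zero
  have hz : ∀ z : ℤ, -(8 * t : ℤ) < z → z < 8 * t → (z : ZMod L) = 0 → z = 0 := by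
    intro z h1 h2 h
    rw [ZMod.intCast_zmod_eq_zero_iff_dvd] at h
    apply Int.eq_zero_of_abs_lt_dvd h
    rw [abs_lt]; push_cast [hL]; omega
  have hq2 : ∀ i ∈ S, (2 * (p i : ZMod L) = q i ∨ 2 * (p i : ZMod L) = -(q i : ZMod L)) := by
    intro i hi
    rcases hpq i hi with h | h
    · left; rw [← h]; push_cast; rfl
    · right
      rw [eq_neg_iff_add_eq_zero]
      have : ((2 * p i + q i : ℕ) : ZMod L) = 0 := by rw [h, ← hL, ZMod.natCast_self]
      push_cast at this; exact this
  have hmem : ∀ i ∈ S, ∀ x ∈ dstar (W i), ∃ w : ℕ, (w = p i ∨ w = q i) ∧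
      (x = w ∨ x = -(w : ZMod L)) := by
    intro i hi x hx
    rw [mem_dstar_iff] at hx
    obtain ⟨⟨u, hu, v, hv, rfl⟩, h0⟩ := hx
    simp only [hW, mem_insert, mem_singleton] at hu hv
    have hP : ∀ y : ZMod L, y = p i ∨ y = -(p i : ZMod L) → ∃ w : ℕ, (w = p i ∨ w = q i) ∧
      (y = w ∨ y = -(w : ZMod L)) := fun y hy => ⟨p i, Or.inl rfl, hy⟩
    have hQ : ∀ y : ZMod L, y = 2 * p i ∨ y = -(2 * p i : ZMod L) →
        ∃ w : ℕ, (w = p i ∨ w = q i) ∧ (y = w ∨ y = -(w : ZMod L)) := by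
      intro y hy
      refine ⟨q i, Or.inr rfl, ?_⟩
      rcases hq2 i hi with h | h <;> rw [h] at hy
      · exact hy
      · rw [neg_neg] at hy; exact hy.symm
    rcases hu with rfl | rfl | rfl <;> rcases hv with rfl | rfl | rfl
    · simp at h0
    · exact hP _ (Or.inr (by ring))
    · exact hQ _ (Or.inr (by ring))
    · exact hP _ (Or.inl (by ring))
    · simp at h0
    · exact hP _ (Or.inr (by ring))
    · exact hQ _ (Or.inl (by ring))
    · exact hP _ (Or.inl (by ring))
    · simp at h0
  have hrange : ∀ i ∈ S, ∀ w : ℕ, (w = p i ∨ w = q i) → 2 ≤ w ∧ w ≤ 4 * t := by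
    intro i hi w hw
    have := hp i hi
    have := hq i hi
    omega
  have hself : ∀ i ∈ S, ∀ x ∈ dstar (W i), x ≠ 1 ∧ x ≠ -1 := by
    intro i hi x hx
    obtain ⟨w, hw, hxw⟩ := hmem i hi x hx
    have hr := hrange i hi w hw
    have k1 : ((w : ℤ) - 1 : ℤ) ≠ 0 := by omega
    have k2 : ((w : ℤ) + 1 : ℤ) ≠ 0 := by omega
    have e1 : (((w : ℤ) - 1 : ℤ) : ZMod L) ≠ 0 := fun h => k1 (hz _ (by omega) (by omega) h)
    have e2 : (((w : ℤ) + 1 : ℤ) : ZMod L) ≠ 0 := fun h => k2 (hz _ (by omega) (by omega) h)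
    push_cast at e1 e2
    rcases hxw with rfl | rfl
    · exact ⟨fun h => e1 (by rw [h]; ring), fun h => e2 (by rw [h]; ring)⟩
    · exact ⟨fun h => e2 (by rw [← h]; ring),
        fun h => e1 (by rw [neg_inj] at h; rw [h]; ring)⟩
  have hfar' : ∀ i ∈ S, ∀ j ∈ S, i ≠ j → ∀ w v : ℕ, (w = p i ∨ w = q i) → (v = p j ∨ v = q j) →
      Far w v := by
    intro i hi j hj hij w v hw hv
    have h1 := hfar i hi j hj hij
    have h2 := hfar j hj i hi hij.symm
    unfold Far at *
    rcases hw with rfl | rfl <;> rcases hv with rfl | rfl <;> omega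
  have hcross : ∀ i ∈ S, ∀ j ∈ S, i ≠ j → ∀ x ∈ dstar (W i), ∀ y ∈ dstar (W j),
      x - y ≠ 0 ∧ x - y ≠ 1 ∧ x - y ≠ -1 := by
    intro i hi j hj hij x hx y hy
    obtain ⟨w, hw, hxw⟩ := hmem i hi x hx
    obtain ⟨v, hv, hyv⟩ := hmem j hj y hy
    have hr := hrange i hi w hw
    have hr' := hrange j hj v hv
    have hf := hfar' i hi j hj hij w v hw hv
    unfold Far at hf
    have gen : ∀ z : ℤ, (z = w - v ∨ z = v - w ∨ z = w + v ∨ z = -w - v) →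
        (z : ZMod L) ≠ 0 ∧ (z : ZMod L) ≠ 1 ∧ (z : ZMod L) ≠ -1 := by
      intro z hz'
      refine ⟨fun h => ?_, fun h => ?_, fun h => ?_⟩
      · have := hz z (by omega) (by omega) h
        omega
      · have := hz (z - 1) (by omega) (by omega) (by push_cast; rw [h]; ring)
        omega
      · have := hz (z + 1) (by omega) (by omega) (by push_cast; rw [h]; ring)
        omega
    rcases hxw with rfl | rfl <;> rcases hyv with rfl | rfl
    · have := gen (w - v) (by omega)
      push_cast at this; exact this
    · have := gen (w + v) (by omega)
      push_cast at this; rw [sub_neg_eq_add]; exact this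
    · have := gen (-w - v) (by omega)
      push_cast at this; exact this
    · have := gen (v - w) (by omega)
      push_cast at this
      rw [show -(w : ZMod L) - -(v : ZMod L) = (v : ZMod L) - w by ring]; exact this
  have hdisj : ∀ i ∈ S, ∀ j ∈ S, i ≠ j → Disjoint (dplus (W i)) (dplus (W j)) := by
    intro i hi j hj hij
    rw [Finset.disjoint_left]
    intro x hx hy
    rw [mem_dplus_iff] at hx hy
    rcases hx with hx | hx <;> rcases hy with hy | hy
    · exact (hcross i hi j hj hij _ hx _ hy).1 (by ring)
    · exact (hcross i hi j hj hij _ hx _ hy).2.1 (by ring)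
    · exact (hcross i hi j hj hij _ hx _ hy).2.2 (by ring)
    · exact (hcross i hi j hj hij _ hx _ hy).1 (by ring)
  have hpne : ∀ i ∈ S, (p i : ZMod L) ≠ 0 ∧ 2 * (p i : ZMod L) ≠ 0 := by
    intro i hi
    have h1 := hp i hi
    have h2 := hq i hi
    constructor
    · intro h
      have := hz (p i) (by omega) (by omega) (by push_cast; exact h)
      omega
    · intro h
      have h3 : ((q i : ℤ) : ZMod L) = 0 := by
        rcases hq2 i hi with e | e
        · push_cast; rw [← e, h]
        · push_cast; rw [← neg_neg (q i : ZMod L), ← e, h, neg_zero]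
      have := hz (q i) (by omega) (by omega) h3
      omega
  have hpd : ∀ i ∈ S, (p i : ZMod L) ∈ dstar (W i) := by
    intro i hi
    rw [mem_dstar_iff]
    exact ⟨⟨p i, by simp [hW], 0, by simp [hW], by ring⟩, (hpne i hi).1⟩
  have hinj : Set.InjOn W S := by
    intro i hi j hj h
    by_contra hij
    have := hpd i hi
    have h' := this
    rw [h] at h'
    exact (hcross i hi j hj hij _ this _ h').1 (sub_self _)
  have hcardC : (S.image W).card = S.card := Finset.card_image_of_injOn hinj
  rw [← hcardC]
  apply le_MS t L ht hL
  refine ⟨?_, ?_, ?_⟩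
  · intro I hI
    obtain ⟨i, hi, rfl⟩ := mem_image.mp hI
    rw [Finset.card_eq_three]
    have h := hpne i hi
    refine ⟨0, p i, 2 * p i, h.1.symm, h.2.symm, ?_, rfl⟩
    intro e
    exact h.1 (by linear_combination -e)
  · intro I hI
    obtain ⟨i, hi, rfl⟩ := mem_image.mp hI
    exact ⟨fun h => (hself i hi _ h).1 rfl, fun h => (hself i hi _ h).2 rfl⟩
  · intro I hI J hJ hne
    obtain ⟨i, hi, rfl⟩ := mem_image.mp hI
    obtain ⟨j, hj, rfl⟩ := mem_image.mp hJ
    exact hdisj i hi j hj (fun h => hne (by rw [h]))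

/-! ### The general family -/

def Good (f : ℕ) : Prop := f % 2 = 1 ∨ f % 8 = 4 ∨ f % 32 = 16 ∨ f % 128 = 64
instance (f : ℕ) : Decidable (Good f) := by unfold Good; infer_instance
def cnt (M : ℕ) : ℕ := (M + 1) / 2 + (M + 4) / 8 + (M + 16) / 32 + (M + 64) / 128
theorem stepA (M : ℕ) : (M+1+1)/2 = (M+1)/2 + (if (M+1)%2=1 then 1 else 0) := by split_ifs <;> omega
theorem stepB (M : ℕ) : (M+1+4)/8 = (M+4)/8 + (if (M+1)%8=4 then 1 else 0) := by split_ifs <;> omega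
theorem stepC (M : ℕ) : (M+1+16)/32 = (M+16)/32 + (if (M+1)%32=16 then 1 else 0) := by split_ifs <;> omega
theorem stepD (M : ℕ) : (M+1+64)/128 = (M+64)/128 + (if (M+1)%128=64 then 1 else 0) := by split_ifs <;> omega
theorem card_good (M : ℕ) : ((Finset.range (M + 1)).filter Good).card = cnt M := by
  induction M with
  | zero => decide
  | succ M ih =>
    rw [Finset.range_add_one, Finset.filter_insert]
    have a := stepA M
    have b := stepB M
    have c := stepC M
    have d := stepD M
    have e : (if Good (M+1) then 1 else 0) = (if (M+1)%2=1 then 1 else 0) + (if (M+1)%8=4 then 1 else 0)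
       + (if (M+1)%32=16 then 1 else 0) + (if (M+1)%128=64 then 1 else 0) := by
      by_cases h1 : (M+1)%2=1
      · rw [if_pos (show Good (M+1) from Or.inl h1), if_pos h1, if_neg, if_neg, if_neg] <;> omega
      by_cases h2 : (M+1)%8=4
      · rw [if_pos (show Good (M+1) from Or.inr (Or.inl h2)), if_neg h1, if_pos h2, if_neg, if_neg] <;> omega
      by_cases h3 : (M+1)%32=16
      · rw [if_pos (show Good (M+1) from Or.inr (Or.inr (Or.inl h3))), if_neg h1, if_neg h2, if_pos h3, if_neg] <;> omega
      by_cases h4 : (M+1)%128=64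
      · rw [if_pos (show Good (M+1) from Or.inr (Or.inr (Or.inr h4))), if_neg h1, if_neg h2, if_neg h3, if_pos h4]
      · rw [if_neg (show ¬ Good (M+1) by unfold Good; tauto), if_neg h1, if_neg h2, if_neg h3, if_neg h4]
    have g : cnt (M+1) = cnt M + (if Good (M+1) then 1 else 0) := by
      rw [e]; unfold cnt; rw [a, b, c, d]; ring
    rw [g]
    split_ifs with h
    · rw [Finset.card_insert_of_notMem (by simp), ih]
    · rw [ih]; rfl
theorem good_pos {f : ℕ} (h : Good f) : 1 ≤ f ∧ (f % 2 = 1 ∨ 4 ≤ f) := by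
  unfold Good at h
  rcases h with h | h | h | h <;> omega
theorem good_dbl {f g : ℕ} (h : Good f) (h' : Good g) : f ≠ 2 * g := by
  unfold Good at h h'
  rintro rfl
  rcases h with h | h | h | h <;> rcases h' with h' | h' | h' | h' <;> omega

theorem far1 (t M f g : ℕ) (hM : 3 * M + 2 ≤ 4 * t) (h1 : f ≤ M) (h3 : g ≤ M) (hne : f ≠ g)
   (hd : f ≠ 2 * g)  (hf : 1 ≤ f) (hg : 1 ≤ g) :
   Far (if f % 2 = 1 then 4 * t - f else f) (if g % 2 = 1 then 4 * t - g else g) ∧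
   Far (if f % 2 = 1 then 4 * t - f else f) (2 * g) ∧ Far (2 * f) (2 * g) := by
  unfold Far
  refine ⟨?_, ?_, ?_⟩
  · split_ifs <;> omega
  · split_ifs <;> omega
  · omega
theorem fin (t : ℕ) (h : 300 ≤ t) : (7 * t + 5) / 8 ≤ cnt ((4 * t - 2) / 3) := by
  unfold cnt
  generalize hM : (4 * t - 2) / 3 = M
  have hM' : 4 * t ≤ 3 * M + 4 := by omega
  have a : M ≤ 2 * ((M + 1) / 2) := by omega
  have b : M ≤ 8 * ((M + 4) / 8) + 3 := by omega
  have c : M ≤ 32 * ((M + 16) / 32) + 15 := by omega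
  have d : M ≤ 128 * ((M + 64) / 128) + 63 := by omega
  have e : 8 * ((7 * t + 5) / 8) ≤ 7 * t + 5 := by omega
  clear hM
  generalize (M + 1) / 2 = x at *
  generalize (M + 4) / 8 = y at *
  generalize (M + 16) / 32 = z at *
  generalize (M + 64) / 128 = w at *
  generalize (7 * t + 5) / 8 = n at *
  suffices (n:ℤ) < x + y + z + w + 1 by omega
  zify at *
  by_contra hh
  push Not at hh
  linarith

theorem family (t L : ℕ) (ht : 3 ≤ t) (hL : L = 8 * t) : cnt ((4 * t - 2) / 3) ≤ MS L 3 := by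
  have hM : 3 * ((4 * t - 2) / 3) + 2 ≤ 4 * t := by omega
  generalize (4 * t - 2) / 3 = M at hM ⊢
  rw [← card_good]
  have hmem : ∀ f ∈ (Finset.range (M + 1)).filter Good,
      f ≤ M ∧ (1 ≤ f ∧ (f % 2 = 1 ∨ 4 ≤ f)) ∧ Good f := by
    intro f hf
    rw [mem_filter, mem_range] at hf
    exact ⟨by omega, good_pos hf.2, hf.2⟩
  refine crit t L ht hL _ (fun f => if f % 2 = 1 then 4 * t - f else f) (fun f => 2 * f)
    ?_ ?_ ?_ ?_
  · intro f hf
    obtain ⟨h1, h2, -⟩ := hmem f hf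
    split_ifs <;> omega
  · intro f hf
    obtain ⟨h1, h2, -⟩ := hmem f hf
    omega
  · intro f hf
    obtain ⟨h1, h2, -⟩ := hmem f hf
    split_ifs <;> omega
  · intro f hf g hg hne
    obtain ⟨h1, h2, h3⟩ := hmem f hf
    obtain ⟨h4, h5, h6⟩ := hmem g hg
    exact far1 t M f g hM h1 h4 hne (good_dbl h3 h6) h2.1 h5.1

/-! ### Sporadic codes -/

/-- second difference, reduced to the lower half -/
def qq (t a : ℕ) : ℕ := if 2 * a ≤ 4 * t then 2 * a else 8 * t - 2 * a

/-- Boolean version of `Far` -/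
def farB (x y : ℕ) : Bool := Nat.ble (x + 2) y || Nat.ble (y + 2) x

/-- checker for sporadic codes -/
def chk (t : ℕ) (l : List ℕ) : Bool :=
  (l.all fun a => Nat.ble 2 a && Nat.ble (a + 1) (4 * t) && Nat.ble 2 (qq t a)) &&
  (l.all fun a => l.all fun b => Nat.beq a b ||
    (farB a b && farB a (qq t b) && farB (qq t a) (qq t b)))

theorem farB_far {x y : ℕ} (h : farB x y = true) : Far x y := by
  unfold farB at h
  unfold Far
  rw [Bool.or_eq_true] at h
  rcases h with h | h
  · exact Or.inl (Nat.le_of_ble_eq_true h)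
  · exact Or.inr (Nat.le_of_ble_eq_true h)

theorem sporadic (t L : ℕ) (l : List ℕ) (n : ℕ) (ht : 3 ≤ t) (hL : L = 8 * t)
    (h : chk t l = true) (hn : n ≤ l.dedup.length) : n ≤ MS L 3 := by
  have hc : l.toFinset.card = l.dedup.length := rfl
  refine hn.trans (hc ▸ ?_)
  unfold chk at h
  simp only [Bool.and_eq_true, List.all_eq_true, Bool.or_eq_true] at h
  obtain ⟨h1, h2⟩ := h
  refine crit t L ht hL _ (fun a => a) (qq t) ?_ ?_ ?_ ?_
  · intro a ha
    rw [List.mem_toFinset] at ha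
    have h3 := Nat.le_of_ble_eq_true (h1 a ha).1.1
    have h4 := Nat.le_of_ble_eq_true (h1 a ha).1.2
    omega
  · intro a ha
    rw [List.mem_toFinset] at ha
    have h3 := Nat.le_of_ble_eq_true (h1 a ha).2
    refine ⟨h3, ?_⟩
    unfold qq; split_ifs <;> omega
  · intro a ha
    rw [List.mem_toFinset] at ha
    have h4 := Nat.le_of_ble_eq_true (h1 a ha).1.2
    unfold qq; split_ifs <;> omega
  · intro a ha b hb hne
    rw [List.mem_toFinset] at ha hb
    rcases h2 a ha b hb with h | ⟨⟨h, h'⟩, h''⟩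
    · exact absurd (Nat.eq_of_beq_eq_true h) hne
    · exact ⟨farB_far h, farB_far h', farB_far h''⟩

/-- required size -/
def need (t : ℕ) : ℕ :=
  if t % 8 = 0 ∨ t % 8 = 1 ∨ t % 8 = 6 ∨ t % 8 = 7 then (7 * t + 1) / 8
  else if t % 3 = 0 then (7 * t + 5) / 8 else (7 * t - 3) / 8

theorem sp3 (L : ℕ) (hL : L = 8 * 3) : 3 ≤ MS L 3 :=
  sporadic 3 L
    [2, 6, 8]
    3 (by norm_num) hL (by decide +kernel) (by decide +kernel)

theorem sp7 (L : ℕ) (hL : L = 8 * 7) : 6 ≤ MS L 3 :=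
  sporadic 7 L
    [8, 19, 21, 23, 25, 27]
    6 (by norm_num) hL (by decide +kernel) (by decide +kernel)

theorem sp8 (L : ℕ) (hL : L = 8 * 8) : 7 ≤ MS L 3 :=
  sporadic 8 L
    [5, 7, 18, 21, 24, 26, 31]
    7 (by norm_num) hL (by decide +kernel) (by decide +kernel)

theorem sp9 (L : ℕ) (hL : L = 8 * 9) : 8 ≤ MS L 3 :=
  sporadic 9 L
    [4, 10, 13, 15, 18, 22, 24, 33]
    8 (by norm_num) hL (by decide +kernel) (by decide +kernel)

theorem sp12 (L : ℕ) (hL : L = 8 * 12) : 11 ≤ MS L 3 :=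
  sporadic 12 L
    [4, 11, 13, 15, 17, 19, 28, 32, 36, 45, 47]
    11 (by norm_num) hL (by decide +kernel) (by decide +kernel)

theorem sp21 (L : ℕ) (hL : L = 8 * 21) : 19 ≤ MS L 3 :=
  sporadic 21 L
    [2, 6, 8, 10, 14, 18, 22, 30, 32, 34, 38, 40, 42, 47, 49, 51, 53, 56, 72]
    19 (by norm_num) hL (by decide +kernel) (by decide +kernel)

theorem sp25 (L : ℕ) (hL : L = 8 * 25) : 22 ≤ MS L 3 :=
  sporadic 25 L
    [8, 20, 24, 28, 32, 67, 69, 71, 73, 75, 77, 79, 81, 83, 85, 87, 89, 91, 93, 95, 97, 99]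
    22 (by norm_num) hL (by decide +kernel) (by decide +kernel)

theorem sp27 (L : ℕ) (hL : L = 8 * 27) : 24 ≤ MS L 3 :=
  sporadic 27 L
    [5, 7, 18, 22, 24, 26, 30, 34, 56, 73, 75, 77, 79, 81, 83, 85, 87, 89, 92, 94, 98, 100,
    102, 107]
    24 (by norm_num) hL (by decide +kernel) (by decide +kernel)

theorem sp31 (L : ℕ) (hL : L = 8 * 31) : 27 ≤ MS L 3 :=
  sporadic 31 L
    [8, 24, 28, 32, 36, 40, 83, 85, 87, 89, 91, 93, 95, 97, 99, 101, 103, 105, 107, 109, 111,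
    113, 115, 117, 119, 121, 123]
    27 (by norm_num) hL (by decide +kernel) (by decide +kernel)

theorem sp32 (L : ℕ) (hL : L = 8 * 32) : 28 ≤ MS L 3 :=
  sporadic 32 L
    [4, 14, 18, 22, 24, 26, 30, 32, 34, 38, 56, 73, 83, 85, 88, 93, 95, 97, 99, 101, 103, 105,
    107, 118, 120, 122, 125, 127]
    28 (by norm_num) hL (by decide +kernel) (by decide +kernel)

theorem sp33 (L : ℕ) (hL : L = 8 * 33) : 29 ≤ MS L 3 :=
  sporadic 33 L
    [2, 8, 12, 14, 18, 20, 22, 26, 30, 32, 34, 38, 46, 48, 50, 54, 57, 66, 70, 72, 74, 79, 81,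
    83, 85, 88, 111, 127, 129]
    29 (by norm_num) hL (by decide +kernel) (by decide +kernel)

theorem sp36 (L : ℕ) (hL : L = 8 * 36) : 32 ≤ MS L 3 :=
  sporadic 36 L
    [2, 8, 10, 12, 28, 30, 32, 35, 37, 39, 41, 43, 45, 47, 49, 51, 54, 58, 62, 72, 80, 84, 92,
    96, 100, 106, 110, 131, 133, 135, 137, 141]
    32 (by norm_num) hL (by decide +kernel) (by decide +kernel)

theorem sp45 (L : ℕ) (hL : L = 8 * 45) : 40 ≤ MS L 3 :=
  sporadic 45 L
    [2, 6, 8, 10, 22, 24, 26, 30, 32, 34, 36, 38, 40, 42, 46, 50, 54, 56, 58, 88, 96, 98, 104,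
    121, 123, 125, 127, 129, 133, 135, 137, 139, 141, 143, 145, 147, 149, 166, 171, 173]
    40 (by norm_num) hL (by decide +kernel) (by decide +kernel)

theorem small_ok : ∀ t < 300, 3 ≤ t → t ∈ [3, 7, 8, 9, 12, 21, 25, 27, 31, 32, 33, 36, 45] ∨
    need t ≤ cnt ((4 * t - 2) / 3) := by
  decide +kernel

theorem need_le (t L : ℕ) (ht : 3 ≤ t) (hL : L = 8 * t) : need t ≤ MS L 3 := by
  have hf := family t L ht hL
  by_cases h : t < 300
  · rcases small_ok t h ht with h | h
    · simp only [List.mem_cons, List.not_mem_nil, or_false] at h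
      rcases h with rfl | rfl | rfl | rfl | rfl | rfl | rfl | rfl | rfl | rfl | rfl | rfl | rfl
      · exact sp3 L hL
      · exact sp7 L hL
      · exact sp8 L hL
      · exact sp9 L hL
      · exact sp12 L hL
      · exact sp21 L hL
      · exact sp25 L hL
      · exact sp27 L hL
      · exact sp31 L hL
      · exact sp32 L hL
      · exact sp33 L hL
      · exact sp36 L hL
      · exact sp45 L hL
    · exact h.trans hf
  · refine le_trans ?_ hf
    have h1 : need t ≤ (7 * t + 5) / 8 := by
      unfold need; split_ifs <;> omega
    refine h1.trans ?_
    exact fin t (by omega)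

theorem MS_bounds_mod8 (t L : ℕ) (ht : 3 ≤ t) (hL : L = 8 * t) :
    MS L 3 ≤ L / 8 ∧
    (t % 8 = 0 → 7 * L / 64 ≤ MS L 3) ∧
    (t % 8 = 1 → (7 * L + 8) / 64 ≤ MS L 3) ∧
    (t % 24 = 2 ∨ t % 24 = 10 → (7 * L - 48) / 64 ≤ MS L 3) ∧
    (t % 24 = 3 → (7 * L + 24) / 64 ≤ MS L 3) ∧
    (t % 24 = 4 ∨ t % 24 = 20 → (7 * L - 32) / 64 ≤ MS L 3) ∧
    (t % 24 = 5 ∨ t % 24 = 13 → (7 * L - 24) / 64 ≤ MS L 3) ∧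
    (t % 8 = 6 → (7 * L - 16) / 64 ≤ MS L 3) ∧
    (t % 8 = 7 → (7 * L - 8) / 64 ≤ MS L 3) ∧
    (t % 24 = 11 ∨ t % 24 = 19 → (7 * L - 40) / 64 ≤ MS L 3) ∧
    (t % 24 = 12 → (7 * L + 32) / 64 ≤ MS L 3) ∧
    (t % 24 = 18 → (7 * L + 16) / 64 ≤ MS L 3) ∧
    (t % 24 = 21 → (7 * L + 40) / 64 ≤ MS L 3) := by
  have h1 := MS_le t L ht hL
  have h2 := need_le t L ht hL
  unfold need at h2
  refine ⟨by omega, ?_, ?_, ?_, ?_, ?_, ?_, ?_, ?_, ?_, ?_, ?_, ?_⟩ <;> intro h <;>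
    split_ifs at h2 <;> omega
end

section
/- Let L > 3 be an odd integer not divisible by 3 such that every prime factor of L is congruent to 5 modulo 8. Then M(L,3) = M^e(L,3) = (L − 1)/4. -/
open Finset

/-- A conflict-avoiding code of length `L` and weight `ω`. -/
def IsCAC (L ω : ℕ) (C : Finset (Finset (ZMod L))) : Prop :=
  (∀ I ∈ C, I.card = ω) ∧
  ∀ I ∈ C, ∀ J ∈ C, I ≠ J → Disjoint (dstar I) (dstar J)

/-- `M(L,ω)`: the maximum size of a CAC of length `L` and weight `ω`. -/
noncomputable def MCAC (L ω : ℕ) : ℕ :=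
  sSup {n | ∃ C : Finset (Finset (ZMod L)), IsCAC L ω C ∧ C.card = n}

/-- An equi-difference codeword of weight three: `I = {0, g, 2g}` for some generator
`1 ≤ g ≤ L/2`. -/
def IsEquiDiff {L : ℕ} (I : Finset (ZMod L)) : Prop :=
  ∃ g : ℕ, 1 ≤ g ∧ 2 * g ≤ L ∧ I = {0, (g : ZMod L), ((2 * g : ℕ) : ZMod L)}

/-- `M^e(L,ω)`: the maximum size of a CAC of length `L` and weight `ω` all of whose
codewords are equi-difference. -/
noncomputable def MeCAC (L ω : ℕ) : ℕ :=
  sSup {n | ∃ C : Finset (Finset (ZMod L)),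
    IsCAC L ω C ∧ (∀ I ∈ C, IsEquiDiff I) ∧ C.card = n}

/-- The leave of a CAC `C` of length `L`: `Λ = ℤ_L \ ⋃_{I ∈ C} d(I)`. -/
def leave {L : ℕ} (C : Finset (Finset (ZMod L))) : Set (ZMod L) :=
  Set.univ \ ⋃ I ∈ C, (dset I : Set (ZMod L))

def colr {L : ℕ} (x : ZMod L) : Prop :=
  IsSquare ((x.val / Nat.gcd x.val L : ℕ) : ZMod (Nat.minFac (L / Nat.gcd x.val L)))

lemma key_gcd (L a b : ℕ) (k t : ℤ) (hk : IsCoprime k (L:ℤ)) (h : (a:ℤ) = k * b + L * t) :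
    Nat.gcd a L = Nat.gcd b L := by
  apply Nat.dvd_antisymm
  · apply Nat.dvd_gcd _ (Nat.gcd_dvd_right _ _)
    have h1 : ((Nat.gcd a L : ℕ) : ℤ) ∣ a := Int.natCast_dvd_natCast.2 (Nat.gcd_dvd_left _ _)
    have h2 : ((Nat.gcd a L : ℕ) : ℤ) ∣ L := Int.natCast_dvd_natCast.2 (Nat.gcd_dvd_right _ _)
    have h3 : ((Nat.gcd a L : ℕ) : ℤ) ∣ k * b := by
      have : k * b = a - L * t := by rw [h]; ring
      rw [this]
      exact dvd_sub h1 (h2.mul_right _)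
    have h4 : IsCoprime ((Nat.gcd a L : ℕ) : ℤ) k := (hk.symm).of_isCoprime_of_dvd_left h2
    exact Int.natCast_dvd_natCast.1 (h4.dvd_of_dvd_mul_left h3)
  · apply Nat.dvd_gcd _ (Nat.gcd_dvd_right _ _)
    have h1 : ((Nat.gcd b L : ℕ) : ℤ) ∣ b := Int.natCast_dvd_natCast.2 (Nat.gcd_dvd_left _ _)
    have h2 : ((Nat.gcd b L : ℕ) : ℤ) ∣ L := Int.natCast_dvd_natCast.2 (Nat.gcd_dvd_right _ _)
    apply Int.natCast_dvd_natCast.1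
    rw [h]
    exact dvd_add (h1.mul_left _) (h2.mul_right _)

lemma key (L : ℕ) [NeZero L] (x y : ZMod L) (k : ℤ) (hx : x ≠ 0) (hk : IsCoprime k (L:ℤ))
    (h : y = k * x) : ∃ p : ℕ, p.Prime ∧ p ∣ L ∧ ∃ u v : ZMod p, v ≠ 0 ∧ u = k * v ∧
      (colr y ↔ IsSquare u) ∧ (colr x ↔ IsSquare v) := by
  have hL : 0 < L := Nat.pos_of_ne_zero (NeZero.ne L)
  have h0 : ((y.val : ℤ) : ZMod L) = ((k * x.val : ℤ) : ZMod L) := by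
    push_cast
    simp [h]
  have h1 := (ZMod.intCast_eq_intCast_iff_dvd_sub _ _ _).1 h0.symm
  obtain ⟨t, ht⟩ := h1
  have h2 : (y.val : ℤ) = k * x.val + L * t := by linarith
  have hg := key_gcd L _ _ k t hk h2
  have hd : 0 < Nat.gcd x.val L := Nat.gcd_pos_of_pos_right _ hL
  unfold colr
  rw [hg]
  set d := Nat.gcd x.val L with hdd
  have hdL : d ∣ L := Nat.gcd_dvd_right _ _
  have hdx : d ∣ x.val := Nat.gcd_dvd_left _ _
  have hdy : d ∣ y.val := hg ▸ Nat.gcd_dvd_left _ _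
  have hxv : 0 < x.val := Nat.pos_of_ne_zero (by rwa [Ne, ZMod.val_eq_zero])
  have hxl : x.val < L := ZMod.val_lt x
  have hcop : Nat.Coprime (x.val / d) (L / d) := Nat.coprime_div_gcd_div_gcd hd
  have hm : L / d ≠ 1 := by
    intro hm
    have h5 := Nat.div_mul_cancel hdL
    rw [hm, one_mul] at h5
    have := Nat.le_of_dvd hxv hdx
    omega
  have hpp := Nat.minFac_prime hm
  have hpd := Nat.minFac_dvd (L / d)
  refine ⟨Nat.minFac (L / d), hpp, hpd.trans (Nat.div_dvd_of_dvd hdL), _, _, ?_, ?_, Iff.rfl, Iff.rfl⟩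
  · intro h6
    rw [ZMod.natCast_eq_zero_iff] at h6
    have := Nat.dvd_gcd h6 hpd
    rw [hcop] at this
    exact hpp.one_lt.ne' (Nat.dvd_one.1 this)
  · obtain ⟨m, hm'⟩ := hdL
    obtain ⟨a, ha⟩ := hdx
    obtain ⟨b, hb⟩ := hdy
    have e1 : L / d = m := by rw [hm']; exact Nat.mul_div_cancel_left _ hd
    have e2 : x.val / d = a := by rw [ha]; exact Nat.mul_div_cancel_left _ hd
    have e3 : y.val / d = b := by rw [hb]; exact Nat.mul_div_cancel_left _ hd
    rw [e1] at hpd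
    rw [e1, e2, e3]
    have h7 : (b : ℤ) = k * a + m * t := by
      have hd' : (d : ℤ) ≠ 0 := by exact_mod_cast hd.ne'
      apply mul_left_cancel₀ hd'
      have e4 : (y.val : ℤ) = d * b := by rw [hb]; push_cast; rfl
      have e5 : (x.val : ℤ) = d * a := by rw [ha]; push_cast; rfl
      have e6 : (L : ℤ) = d * m := by exact_mod_cast hm'
      rw [e4, e5, e6] at h2
      rw [h2]; ring
    have h8 := congrArg (Int.cast : ℤ → ZMod (Nat.minFac m)) h7
    have h9 : ((m : ℕ) : ZMod (Nat.minFac m)) = 0 := by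
      rw [ZMod.natCast_eq_zero_iff]; exact Nat.minFac_dvd m
    push_cast at h8
    rw [h9] at h8
    simpa using h8

lemma colr_neg (L : ℕ) [NeZero L] (hp : ∀ p : ℕ, p.Prime → p ∣ L → p % 8 = 5)
    (x : ZMod L) (hx : x ≠ 0) : colr (-x) ↔ colr x := by
  obtain ⟨p, hpp, hpL, u, v, hv, huv, h1, h2⟩ := key L x (-x) (-1) hx
    (by exact isCoprime_one_left.neg_left) (by simp)
  have := Fact.mk hpp
  have h5 := hp p hpp hpL
  have hs : IsSquare (-1 : ZMod p) := ZMod.exists_sq_eq_neg_one_iff.2 (by omega)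
  rw [h1, h2]
  have huv' : u = -1 * v := by simpa using huv
  constructor
  · intro h
    have : v = -1 * u := by rw [huv']; ring
    rw [this]; exact hs.mul h
  · intro h
    rw [huv']; exact hs.mul h

lemma colr_two (L : ℕ) [NeZero L] (hodd : Odd L) (hp : ∀ p : ℕ, p.Prime → p ∣ L → p % 8 = 5)
    (x : ZMod L) (hx : x ≠ 0) : colr (2 * x) ↔ ¬ colr x := by
  obtain ⟨p, hpp, hpL, u, v, hv, huv, h1, h2⟩ := key L x (2 * x) 2 hx
    (by
      have : Nat.Coprime 2 L := (Nat.coprime_two_left).2 hodd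
      exact_mod_cast this.isCoprime) (by simp)
  have := Fact.mk hpp
  have h5 := hp p hpp hpL
  have hp2 : p ≠ 2 := by omega
  have hc : ringChar (ZMod p) ≠ 2 := by rwa [ZMod.ringChar_zmod_n]
  have hs : ¬ IsSquare (2 : ZMod p) := by
    rw [ZMod.exists_sq_eq_two_iff hp2]; omega
  have h20 : (2 : ZMod p) ≠ 0 := by
    intro h; apply hs; rw [h]; exact IsSquare.zero
  have huv' : u = 2 * v := by simpa using huv
  have hu : u ≠ 0 := by rw [huv']; exact mul_ne_zero h20 hv
  rw [h1, h2, ← quadraticChar_one_iff_isSquare hu, ← quadraticChar_one_iff_isSquare hv, huv',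
    map_mul, quadraticChar_neg_one_iff_not_isSquare.2 hs]
  rcases quadraticChar_dichotomy hv with h | h <;> rw [h] <;> norm_num

section
variable {L : ℕ}

lemma mem_dstar (I : Finset (ZMod L)) (z : ZMod L) :
    z ∈ dstar I ↔ (∃ a ∈ I, ∃ b ∈ I, a - b = z) ∧ z ≠ 0 := by
  simp only [dstar, dset, mem_sdiff, mem_image, mem_product, mem_singleton, Prod.exists]
  constructor
  · rintro ⟨⟨a, b, ⟨ha, hb⟩, h⟩, h0⟩
    exact ⟨⟨a, ha, b, hb, h⟩, h0⟩
  · rintro ⟨⟨a, ha, b, hb, h⟩, h0⟩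
    exact ⟨⟨a, b, ⟨ha, hb⟩, h⟩, h0⟩

lemma two_cancel (hodd : Odd L) (x : ZMod L) (h : 2 * x = 0) : x = 0 := by
  have : IsUnit ((2 : ℕ) : ZMod L) :=
    (ZMod.isUnit_iff_coprime 2 L).2 (Nat.coprime_two_left.2 hodd)
  push_cast at this
  exact (this.mul_right_eq_zero).1 h

lemma three_cancel (h3 : ¬ 3 ∣ L) (x : ZMod L) (h : 3 * x = 0) : x = 0 := by
  have : IsUnit ((3 : ℕ) : ZMod L) :=
    (ZMod.isUnit_iff_coprime 3 L).2 ((Nat.Prime.coprime_iff_not_dvd Nat.prime_three).2 h3)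
  push_cast at this
  exact (this.mul_right_eq_zero).1 h

lemma four_card (hodd : Odd L) (x y : ZMod L) (hx : x ≠ 0) (hy : y ≠ 0) (h1 : x ≠ y)
    (h2 : x ≠ -y) : ({x, -x, y, -y} : Finset (ZMod L)).card = 4 := by
  have hx' : x ≠ -x := fun h => hx (two_cancel hodd x (by linear_combination h))
  have hy' : y ≠ -y := fun h => hy (two_cancel hodd y (by linear_combination h))
  have h3 : -x ≠ y := fun h => h2 (by rw [← h, neg_neg])
  have h4 : -x ≠ -y := fun h => h1 (neg_injective h)
  rw [card_insert_of_notMem (by simp [*]), card_insert_of_notMem (by simp [*]),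
    card_insert_of_notMem (by simp [*]), card_singleton]

lemma dstar_card (hodd : Odd L) (h3 : ¬ 3 ∣ L) (I : Finset (ZMod L)) (hI : I.card = 3) :
    4 ≤ (dstar I).card := by
  obtain ⟨a, b, c, hab, hac, hbc, rfl⟩ := Finset.card_eq_three.1 hI
  have hsub : ∀ x y : ZMod L, x ≠ 0 → y ≠ 0 → x ≠ y → x ≠ -y → x ∈ dstar {a, b, c} →
      -x ∈ dstar {a, b, c} → y ∈ dstar {a, b, c} → -y ∈ dstar {a, b, c} →
      4 ≤ (dstar ({a, b, c} : Finset (ZMod L))).card := by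
    intro x y hx hy h1 h2 m1 m2 m3 m4
    rw [← four_card hodd x y hx hy h1 h2]
    apply card_le_card
    intro z hz
    simp only [mem_insert, mem_singleton] at hz
    rcases hz with rfl | rfl | rfl | rfl <;> assumption
  have mem : ∀ u ∈ ({a, b, c} : Finset (ZMod L)), ∀ v ∈ ({a, b, c} : Finset (ZMod L)), u ≠ v →
      u - v ∈ dstar ({a, b, c} : Finset (ZMod L)) := by
    intro u hu v hv huv
    exact (mem_dstar _ _).2 ⟨⟨u, hu, v, hv, rfl⟩, sub_ne_zero.2 huv⟩
  have ma : a ∈ ({a, b, c} : Finset (ZMod L)) := by simp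
  have mb : b ∈ ({a, b, c} : Finset (ZMod L)) := by simp
  have mc : c ∈ ({a, b, c} : Finset (ZMod L)) := by simp
  by_cases he : a - b = b - c
  · apply hsub (a - b) (a - c) (sub_ne_zero.2 hab) (sub_ne_zero.2 hac)
    · intro h; exact hbc (by linear_combination -h)
    · intro h
      apply hab
      apply sub_eq_zero.1
      apply three_cancel h3
      linear_combination h + he
    · exact mem a ma b mb hab
    · rw [neg_sub]; exact mem b mb a ma hab.symm
    · exact mem a ma c mc hac
    · rw [neg_sub]; exact mem c mc a ma hac.symm
  · apply hsub (a - b) (b - c) (sub_ne_zero.2 hab) (sub_ne_zero.2 hbc) he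
    · intro h; exact hac (by linear_combination h)
    · exact mem a ma b mb hab
    · rw [neg_sub]; exact mem b mb a ma hab.symm
    · exact mem b mb c mc hbc
    · rw [neg_sub]; exact mem c mc b mb hbc.symm

lemma upper [NeZero L] (hodd : Odd L) (h3 : ¬ 3 ∣ L) (C : Finset (Finset (ZMod L)))
    (hC : IsCAC L 3 C) : C.card ≤ (L - 1) / 4 := by
  have h1 : (C.biUnion dstar).card = ∑ I ∈ C, (dstar I).card :=
    card_biUnion (fun I hI J hJ h => hC.2 I hI J hJ h)
  have h2 : C.card * 4 ≤ ∑ I ∈ C, (dstar I).card := by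
    rw [← smul_eq_mul]
    exact card_nsmul_le_sum _ _ _ (fun I hI => dstar_card hodd h3 I (hC.1 I hI))
  have h4 : (C.biUnion dstar).card ≤ (univ.erase (0 : ZMod L)).card := by
    apply card_le_card
    intro z hz
    obtain ⟨I, -, hz⟩ := mem_biUnion.1 hz
    exact mem_erase.2 ⟨((mem_dstar _ _).1 hz).2, mem_univ _⟩
  rw [card_erase_of_mem (mem_univ _), card_univ, ZMod.card] at h4
  omega

def cw (L : ℕ) (g : ℕ) : Finset (ZMod L) := {0, (g : ZMod L), ((2 * g : ℕ) : ZMod L)}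

lemma dstar_cw (g : ℕ) (z : ZMod L) (h0 : z ≠ 0) :
    z ∈ dstar (cw L g) ↔ z = g ∨ z = -g ∨ z = 2 * g ∨ z = -(2 * g) := by
  rw [mem_dstar]
  simp only [cw, mem_insert, mem_singleton, exists_eq_or_imp, exists_eq_left]
  push_cast
  constructor
  · rintro ⟨h, -⟩
    have e1 : (2 * g - g : ZMod L) = g := by ring
    have e2 : (g - 2 * g : ZMod L) = -g := by ring
    simp only [e1, e2, sub_self, zero_sub, sub_zero] at h
    have := h0.symm
    tauto
  · intro h
    refine ⟨?_, h0⟩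
    rcases h with h | h | h | h
    · right; left; left; rw [h]; ring
    · left; right; left; rw [h]; ring
    · right; right; left; rw [h]; ring
    · left; right; right; rw [h]; ring

lemma lower [NeZero L] (hL : 3 < L) (hodd : Odd L) (h3 : ¬ 3 ∣ L)
    (hp : ∀ p : ℕ, p.Prime → p ∣ L → p % 8 = 5) :
    ∃ C : Finset (Finset (ZMod L)), IsCAC L 3 C ∧ (∀ I ∈ C, IsEquiDiff I) ∧
      (L - 1) / 4 ≤ C.card := by
  classical
  obtain ⟨N, hN⟩ := hodd
  have hodd : Odd L := ⟨N, hN⟩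
  have cneg := colr_neg L hp
  have ctwo := colr_two L hodd hp
  let S := (Finset.Icc 1 N).filter (fun g : ℕ => colr (g : ZMod L))
  have hS : ∀ g, g ∈ S ↔ (1 ≤ g ∧ g ≤ N) ∧ colr (g : ZMod L) := by
    intro g; simp [S]
  have hS0 : ∀ g, 1 ≤ g → g ≤ N → (g : ZMod L) ≠ 0 := by
    intro g hg hg' h
    rw [ZMod.natCast_eq_zero_iff] at h
    have := Nat.le_of_dvd hg h
    omega
  have two0 : ∀ x : ZMod L, x ≠ 0 → 2 * x ≠ 0 := fun x hx h => hx (two_cancel hodd x h)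
  refine ⟨S.image (cw L), ⟨?_, ?_⟩, ?_, ?_⟩
  · intro I hI
    obtain ⟨g, hg, rfl⟩ := mem_image.1 hI
    obtain ⟨⟨h1, h2⟩, -⟩ := (hS g).1 hg
    have h0 := hS0 g h1 h2
    rw [card_eq_three]
    refine ⟨0, g, _, h0.symm, ?_, ?_, rfl⟩
    · push_cast; exact (two0 _ h0).symm
    · push_cast; intro h; exact h0 (by linear_combination -h)
  · intro I hI J hJ hIJ
    obtain ⟨g, hg, rfl⟩ := mem_image.1 hI
    obtain ⟨k, hk, rfl⟩ := mem_image.1 hJ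
    obtain ⟨⟨g1, g2⟩, g3⟩ := (hS g).1 hg
    obtain ⟨⟨k1, k2⟩, k3⟩ := (hS k).1 hk
    have g0 := hS0 g g1 g2
    have k0 := hS0 k k1 k2
    have hgk : g ≠ k := fun h => hIJ (by rw [h])
    have n1 : (g : ZMod L) ≠ k := by
      intro h
      rw [ZMod.natCast_eq_natCast_iff'] at h
      rw [Nat.mod_eq_of_lt (by omega), Nat.mod_eq_of_lt (by omega)] at h
      exact hgk h
    have n2 : (g : ZMod L) ≠ -k := by
      intro h
      have : ((g + k : ℕ) : ZMod L) = 0 := by push_cast; rw [h]; ring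
      rw [ZMod.natCast_eq_zero_iff] at this
      have := Nat.le_of_dvd (by omega) this
      omega
    have n3 : (g : ZMod L) ≠ 2 * k := fun h => (ctwo _ k0).1 (h ▸ g3) k3
    have n4 : (g : ZMod L) ≠ -(2 * k) := fun h =>
      (ctwo _ k0).1 ((cneg _ (two0 _ k0)).1 (h ▸ g3)) k3
    have n5 : (k : ZMod L) ≠ 2 * g := fun h => (ctwo _ g0).1 (h ▸ k3) g3
    have n6 : (k : ZMod L) ≠ -(2 * g) := fun h =>
      (ctwo _ g0).1 ((cneg _ (two0 _ g0)).1 (h ▸ k3)) g3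
    have n7 : (2 * g : ZMod L) ≠ 2 * k := fun h =>
      n1 (sub_eq_zero.1 (two_cancel hodd _ (by linear_combination h)))
    have n8 : (2 * g : ZMod L) ≠ -(2 * k) := fun h =>
      n2 (sub_eq_zero.1 (two_cancel hodd _ (by linear_combination h)))
    rw [disjoint_left]
    intro z hz hz'
    have z0 := ((mem_dstar _ _).1 hz).2
    rw [dstar_cw _ _ z0] at hz hz'
    clear hS0 two0 ctwo cneg hS
    rcases hz with h | h | h | h <;> rcases hz' with h' | h' | h' | h' <;> rw [h] at h' <;>
      grind
  · intro I hI
    obtain ⟨g, hg, rfl⟩ := mem_image.1 hI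
    obtain ⟨⟨h1, h2⟩, -⟩ := (hS g).1 hg
    exact ⟨g, h1, by omega, rfl⟩
  · have rep : ∀ x : ZMod L, x ≠ 0 → colr x → ∃ g ∈ S, x = g ∨ x = -g := by
      intro x hx hc
      have hv : x.val ≠ 0 := by rwa [Ne, ZMod.val_eq_zero]
      have hl := ZMod.val_lt x
      by_cases h : x.val ≤ N
      · exact ⟨x.val, (hS _).2 ⟨⟨by omega, h⟩, by simpa using hc⟩, by simp⟩
      · have e : ((L - x.val : ℕ) : ZMod L) = -x := by
          rw [Nat.cast_sub hl.le]; simp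
        exact ⟨L - x.val, (hS _).2 ⟨⟨by omega, by omega⟩, by rw [e]; exact (cneg x hx).2 hc⟩,
          by rw [e]; simp⟩
    have hcov : univ.erase (0 : ZMod L) ⊆ (S.image (cw L)).biUnion dstar := by
      intro x hx
      have hx0 : x ≠ 0 := (mem_erase.1 hx).1
      by_cases hc : colr x
      · obtain ⟨g, hg, h⟩ := rep x hx0 hc
        refine mem_biUnion.2 ⟨cw L g, mem_image_of_mem _ hg, (dstar_cw g x hx0).2 ?_⟩
        tauto
      · obtain ⟨y, hy⟩ : ∃ y : ZMod L, x = 2 * y := by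
          refine ⟨(N + 1) * x, ?_⟩
          have : (L : ZMod L) = 0 := ZMod.natCast_self L
          have e : ((2 * N + 1 : ℕ) : ZMod L) = 0 := by rw [← hN]; exact this
          push_cast at e
          linear_combination -x * e
        have hy0 : y ≠ 0 := by rintro rfl; simp at hy; exact hx0 hy
        have hcy : colr y := by
          by_contra h
          exact hc (hy ▸ (ctwo y hy0).2 h)
        obtain ⟨g, hg, h⟩ := rep y hy0 hcy
        refine mem_biUnion.2 ⟨cw L g, mem_image_of_mem _ hg, (dstar_cw g x hx0).2 ?_⟩
        rcases h with h | h
        · right; right; left; rw [hy, h]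
        · right; right; right; rw [hy, h]; ring
    have h1 := card_le_card hcov
    rw [card_erase_of_mem (mem_univ _), card_univ, ZMod.card] at h1
    have h2 : ((S.image (cw L)).biUnion dstar).card ≤ (S.image (cw L)).card * 4 := by
      apply card_biUnion_le_card_mul
      intro I hI
      obtain ⟨g, hg, rfl⟩ := mem_image.1 hI
      refine le_trans (card_le_card (t := {(g : ZMod L), -(g : ZMod L), 2 * (g : ZMod L),
        -(2 * (g : ZMod L))}) ?_) card_le_four
      intro z hz
      have z0 := ((mem_dstar _ _).1 hz).2
      simpa using (dstar_cw g z z0).1 hz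
    omega

end

theorem MCAC_all_factors_5_mod_8 (L : ℕ) (hL : 3 < L) (hodd : Odd L) (h3 : ¬ 3 ∣ L)
    (hp : ∀ p : ℕ, p.Prime → p ∣ L → p % 8 = 5) :
    MCAC L 3 = (L - 1) / 4 ∧ MeCAC L 3 = (L - 1) / 4 := by
  have : NeZero L := ⟨by omega⟩
  obtain ⟨C, hC, hE, hc⟩ := lower hL hodd h3 hp
  have hc' : C.card = (L - 1) / 4 := le_antisymm (upper hodd h3 C hC) hc
  constructor
  · apply IsGreatest.csSup_eq
    refine ⟨⟨C, hC, hc'⟩, ?_⟩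
    rintro n ⟨D, hD, rfl⟩
    exact upper hodd h3 D hD
  · apply IsGreatest.csSup_eq
    refine ⟨⟨C, hC, hE, hc'⟩, ?_⟩
    rintro n ⟨D, hD, -, rfl⟩
    exact upper hodd h3 D hD
end
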